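/- arXiv:2510.15063 — 2 statements merged into one kernel-verified Lean document; each statement's English description precedes it below -/
import Mathlib

section
/- Fix real constants D_loss ≥ 0, D_conf > 0, α > 0, ε_M with 0 ≤ ε_M < 1, and C > 0, V > 0, d_K > 0. Then the function n_K ↦ ε_M·D_loss + α·(1 − ε_M)·Q((ln 2)·√(n_K/V)·(C − d_K/n_K))·D_conf is strictly decreasing on (0, ∞). -/
/-- The Gaussian Q-function `Q(x) = (1/√(2π)) ∫_x^∞ e^{−t²/2} dt`. -/
noncomputable def gaussQ (x : ℝ) : ℝ :=
  (Real.sqrt (2 * Real.pi))⁻¹ * ∫ t in Set.Ioi x, Real.exp (-t ^ 2 / 2)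

/-!
Substituting `s = √(n / V)` turns `√(n / V) * (C - d / n)` into `C * s - (d / V) / s`: the first
term is strictly increasing in `s`, and the second is nonincreasing. The Gaussian tail is strictly
antitone because its density is positive.
-/

open Set MeasureTheory

theorem strictAnti_integral_Ioi {f : ℝ → ℝ} (hf : Integrable f) (hpos : ∀ t, 0 < f t) :
    StrictAnti fun x => ∫ t in Ioi x, f t := by
  intro x y hxy
  have hsub : (∫ t in Ioi x, f t) - ∫ t in Ioi y, f t = ∫ t in x..y, f t :=
    intervalIntegral.integral_Ioi_sub_Ioi hf.integrableOn hxy.le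
  have hgap : 0 < ∫ t in x..y, f t :=
    intervalIntegral.intervalIntegral_pos_of_pos hf.intervalIntegrable hpos hxy
  exact sub_pos.mp (hsub ▸ hgap)

theorem integrable_exp_neg_sq_div_two : Integrable fun t : ℝ => Real.exp (-t ^ 2 / 2) := by
  simpa only [neg_mul, one_div_mul_eq_div, neg_div] using
    integrable_exp_neg_mul_sq (b := 1 / 2) one_half_pos

theorem gaussQ_strictAnti : StrictAnti gaussQ :=
  (strictAnti_integral_Ioi integrable_exp_neg_sq_div_two fun _ => Real.exp_pos _).const_mul
    (by positivity)

theorem sqrt_mul_sub_div (c d x : ℝ) : √x * (c - d / x) = c * √x - d / √x :=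
  calc √x * (c - d / x) = c * √x - d * (√x / x) := by ring
    _ = c * √x - d / √x := by rw [Real.sqrt_div_self, div_eq_mul_inv]

theorem strictMonoOn_sqrt_mul_sub_div {c d : ℝ} (hc : 0 < c) (hd : 0 ≤ d) :
    StrictMonoOn (fun x => √x * (c - d / x)) (Ioi 0) := by
  intro x (hx : 0 < x) y _ hxy
  have hsqrt : √x < √y := Real.sqrt_lt_sqrt hx.le hxy
  have hlinear : c * √x < c * √y := mul_lt_mul_of_pos_left hsqrt hc
  have hinverse : d / √y ≤ d / √x := div_le_div_of_nonneg_left hd (Real.sqrt_pos.2 hx) hsqrt.le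
  simp only [sqrt_mul_sub_div]
  linarith

theorem strictMonoOn_sqrt_div_mul_sub_div {C V d : ℝ} (hC : 0 < C) (hV : 0 < V) (hd : 0 ≤ d) :
    StrictMonoOn (fun n => √(n / V) * (C - d / n)) (Ioi 0) := by
  have hrescaled := (strictMonoOn_sqrt_mul_sub_div hC (div_nonneg hd hV.le)).comp
    ((strictMono_div_right_of_pos hV).strictMonoOn (Ioi 0)) fun _ hn => div_pos hn hV
  simpa only [Function.comp_def, div_div_div_cancel_right₀ hV.ne'] using hrescaled

theorem distortion_strictAntiOn_key_blocklength_general {Q : ℝ → ℝ} (hQ : StrictAnti Q)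
    (Dloss : ℝ) {Dconf α εM c C V dK : ℝ} (hDconf : 0 < Dconf) (hα : 0 < α) (hεM : εM < 1)
    (hc : 0 < c) (hC : 0 < C) (hV : 0 < V) (hdK : 0 ≤ dK) :
    StrictAntiOn
      (fun nK => εM * Dloss + α * (1 - εM) * Q (c * √(nK / V) * (C - dK / nK)) * Dconf)
      (Ioi 0) := by
  have harg : StrictMonoOn (fun nK => c * √(nK / V) * (C - dK / nK)) (Ioi 0) := by
    simpa only [Function.comp_def, mul_assoc] using
      (strictMono_mul_left_of_pos hc).comp_strictMonoOn
        (strictMonoOn_sqrt_div_mul_sub_div hC hV hdK)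
  have hweight : 0 < α * (1 - εM) := mul_pos hα (sub_pos.2 hεM)
  have hdistortion : StrictMono fun q => εM * Dloss + α * (1 - εM) * q * Dconf :=
    ((strictMono_id.const_mul hweight).mul_const hDconf).const_add _
  exact hdistortion.comp_strictAntiOn (hQ.comp_strictMonoOn harg)

/-- With `D_loss ≥ 0`, `D_conf > 0`, `α > 0`, `0 ≤ ε_M < 1` and `C, V, d_K > 0`,
the function `n_K ↦ ε_M·D_loss + α·(1 − ε_M)·Q((ln 2)·√(n_K/V)·(C − d_K/n_K))·D_conf`
is strictly decreasing on `(0, ∞)`. -/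
theorem distortion_strictAntiOn_key_blocklength
    (Dloss Dconf α εM C V dK : ℝ)
    (hDloss : 0 ≤ Dloss) (hDconf : 0 < Dconf) (hα : 0 < α)
    (hεM0 : 0 ≤ εM) (hεM1 : εM < 1)
    (hC : 0 < C) (hV : 0 < V) (hdK : 0 < dK) :
    StrictAntiOn
      (fun nK : ℝ => εM * Dloss +
        α * (1 - εM) * gaussQ (Real.log 2 * Real.sqrt (nK / V) * (C - dK / nK)) * Dconf)
      (Set.Ioi 0) := by
  exact distortion_strictAntiOn_key_blocklength_general gaussQ_strictAnti Dloss hDconf hα hεM1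
    (Real.log_pos one_lt_two) hC hV hdK.le
end

section
/- (Theorem 1, case of large ciphering probability.) Fix γ > 0, d_M > 0, d_K > 0 and set C = log₂(1+γ), V = 1 − (1+γ)^{−2}, ε(n, d) = Q((ln 2)·√(n/V)·(C − d/n)). Fix D_loss > 0, D_conf > 0 and α > 0, and define D(n_M, n_K) = ε(n_M, d_M)·D_loss + α·(1 − ε(n_M, d_M))·ε(n_K, d_K)·D_conf. Let 0 < a_M ≤ b_M and 0 < a_K ≤ b_K be blocklength bounds. If α·ε(a_K, d_K)·D_conf ≥ D_loss, then for all n_M ∈ [a_M, b_M] and n_K ∈ [a_K, b_K] one has D(n_M, n_K) ≤ D(b_M, a_K); that is, the maximum of D over the box is attained at (n_M^max, n_K^min). -/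
/-- Finite-blocklength error probability for SNR `γ`, payload `d`, blocklength `n`,
with capacity `C = log₂(1+γ)` and dispersion `V = 1 − (1+γ)^{−2}`. -/
noncomputable def epsFBL (γ d n : ℝ) : ℝ :=
  gaussQ (Real.log 2 * Real.sqrt (n / (1 - ((1 + γ) ^ 2)⁻¹)) *
    (Real.logb 2 (1 + γ) - d / n))

/-- The eavesdropper's expected semantic distortion
`D(n_M, n_K) = ε(n_M,d_M)·D_loss + α·(1 − ε(n_M,d_M))·ε(n_K,d_K)·D_conf`. -/
noncomputable def deceptionDistortion (γ dM dK Dloss Dconf α nM nK : ℝ) : ℝ :=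
  epsFBL γ dM nM * Dloss + α * (1 - epsFBL γ dM nM) * epsFBL γ dK nK * Dconf

/-!
The error probability `ε(n, d)` decreases in the blocklength `n`: the argument of `Q` is
`ln 2 · (C √n - d / √n) / √V`, where both `C √n` and `-d / √n` increase with `n`.
The distortion increases with `ε(n_K, d_K)`, so it is largest at the smallest `n_K`. At that `n_K`
it is affine in `ε(n_M, d_M)` with slope `D_loss - α ε(n_K, d_K) D_conf ≤ 0`, so it is largest at
the largest `n_M`.
-/

open ProbabilityTheory Set

theorem gaussQ_eq_gaussianReal_real_Ioi (x : ℝ) :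
    gaussQ x = (gaussianReal 0 1).real (Ioi x) := by
  have density : ∀ t : ℝ,
      gaussianPDFReal 0 1 t = (√(2 * Real.pi))⁻¹ * Real.exp (-t ^ 2 / 2) := by
    simp [gaussianPDFReal]
  have nonneg : 0 ≤ ∫ t in Ioi x, gaussianPDFReal 0 1 t :=
    MeasureTheory.integral_nonneg (gaussianPDFReal_nonneg 0 1)
  rw [MeasureTheory.measureReal_def, gaussianReal_apply_eq_integral 0 one_ne_zero,
    ENNReal.toReal_ofReal nonneg]
  simp only [density, MeasureTheory.integral_const_mul, gaussQ]

theorem gaussQ_antitone : Antitone gaussQ := fun x y hxy ↦ by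
  simp only [gaussQ_eq_gaussianReal_real_Ioi]
  exact MeasureTheory.measureReal_mono (Ioi_subset_Ioi hxy)

theorem gaussQ_le_one (x : ℝ) : gaussQ x ≤ 1 := by
  rw [gaussQ_eq_gaussianReal_real_Ioi]
  exact MeasureTheory.measureReal_le_one

theorem sqrt_div_mul_sub_div {n : ℝ} (hn : 0 ≤ n) (V C d : ℝ) :
    √(n / V) * (C - d / n) = (C * √n - d / √n) / √V := by
  calc √(n / V) * (C - d / n) = (C * √n - d * (√n / n)) / √V := by
        rw [Real.sqrt_div hn]
        ring
    _ = (C * √n - d / √n) / √V := by rw [Real.sqrt_div_self', mul_one_div]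

theorem monotoneOn_sqrt_div_mul_sub_div {C d : ℝ} (V : ℝ) (hC : 0 ≤ C) (hd : 0 ≤ d) :
    MonotoneOn (fun n : ℝ ↦ √(n / V) * (C - d / n)) (Ioi 0) := by
  intro m hm n hn hmn
  have sqrt_pos : 0 < √m := Real.sqrt_pos.2 hm
  simp only [sqrt_div_mul_sub_div (le_of_lt hm), sqrt_div_mul_sub_div (le_of_lt hn)]
  gcongr

section Distortion

variable {γ dM dK Dloss Dconf α : ℝ}

theorem epsFBL_le_one (γ d n : ℝ) : epsFBL γ d n ≤ 1 :=
  gaussQ_le_one _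

theorem epsFBL_antitoneOn {d : ℝ} (hγ : 0 ≤ γ) (hd : 0 ≤ d) :
    AntitoneOn (epsFBL γ d) (Ioi 0) := by
  intro m hm n hn hmn
  have capacity_nonneg : 0 ≤ Real.logb 2 (1 + γ) :=
    Real.logb_nonneg one_lt_two (le_add_of_nonneg_right hγ)
  refine gaussQ_antitone ?_
  simp only [mul_assoc]
  exact mul_le_mul_of_nonneg_left
    (monotoneOn_sqrt_div_mul_sub_div _ capacity_nonneg hd hm hn hmn) (Real.log_nonneg one_le_two)

theorem deceptionDistortion_antitoneOn_key (hγ : 0 ≤ γ) (hdK : 0 ≤ dK) (hDconf : 0 ≤ Dconf)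
    (hα : 0 ≤ α) (nM : ℝ) :
    AntitoneOn (fun nK ↦ deceptionDistortion γ dM dK Dloss Dconf α nM nK) (Ioi 0) := by
  intro m hm n hn hmn
  have success_nonneg : 0 ≤ 1 - epsFBL γ dM nM := sub_nonneg.2 (epsFBL_le_one γ dM nM)
  have eps_le : epsFBL γ dK n ≤ epsFBL γ dK m := epsFBL_antitoneOn hγ hdK hm hn hmn
  simp only [deceptionDistortion]
  gcongr

theorem deceptionDistortion_eq_sub (γ dM dK Dloss Dconf α nM nK : ℝ) :
    deceptionDistortion γ dM dK Dloss Dconf α nM nK =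
      α * epsFBL γ dK nK * Dconf - (α * epsFBL γ dK nK * Dconf - Dloss) * epsFBL γ dM nM := by
  rw [deceptionDistortion]
  ring

theorem deceptionDistortion_monotoneOn_message {nK : ℝ} (hγ : 0 ≤ γ) (hdM : 0 ≤ dM)
    (hcase : Dloss ≤ α * epsFBL γ dK nK * Dconf) :
    MonotoneOn (fun nM ↦ deceptionDistortion γ dM dK Dloss Dconf α nM nK) (Ioi 0) := by
  intro m hm n hn hmn
  simp only [deceptionDistortion_eq_sub]
  exact sub_le_sub_left (mul_le_mul_of_nonneg_left
    (epsFBL_antitoneOn hγ hdM hm hn hmn) (sub_nonneg.2 hcase)) _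

end Distortion

/-- Theorem 1, case of large ciphering probability: if
`α·ε(a_K,d_K)·D_conf ≥ D_loss`, the maximum of the distortion `D` over the box
`[a_M, b_M] × [a_K, b_K]` is attained at `(n_M^max, n_K^min) = (b_M, a_K)`. -/
theorem distortion_max_large_alpha
    (γ dM dK Dloss Dconf α aM bM aK bK : ℝ)
    (hγ : 0 < γ) (hdM : 0 < dM) (hdK : 0 < dK)
    (hDloss : 0 < Dloss) (hDconf : 0 < Dconf) (hα : 0 < α)
    (haM : 0 < aM) (hMb : aM ≤ bM) (haK : 0 < aK) (hKb : aK ≤ bK)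
    (hcase : Dloss ≤ α * epsFBL γ dK aK * Dconf) :
    ∀ nM ∈ Set.Icc aM bM, ∀ nK ∈ Set.Icc aK bK,
      deceptionDistortion γ dM dK Dloss Dconf α nM nK ≤
        deceptionDistortion γ dM dK Dloss Dconf α bM aK := by
  rintro nM ⟨hnM, hnMb⟩ nK ⟨hnK, -⟩
  calc deceptionDistortion γ dM dK Dloss Dconf α nM nK
      ≤ deceptionDistortion γ dM dK Dloss Dconf α nM aK :=
        deceptionDistortion_antitoneOn_key hγ.le hdK.le hDconf.le hα.le nM
          haK (haK.trans_le hnK) hnK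
    _ ≤ deceptionDistortion γ dM dK Dloss Dconf α bM aK :=
        deceptionDistortion_monotoneOn_message hγ.le hdM.le hcase
          (haM.trans_le hnM) (haM.trans_le hMb) hnMb
end
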